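/- Let G be a finitely generated group and let H₁ and H₂ be strongly quasiconvex subgroups of G. Then H₁ ∩ H₂ is strongly quasiconvex in H₁, strongly quasiconvex in H₂, and strongly quasiconvex in G. -/

import Mathlib

/-! The ambient case is elementary: a quasi-geodesic with endpoints in `H₁ ⊓ H₂` is close to both
`H₁` and `H₂`, and since balls in the word metric are finite, the intersection of an
`n`-neighbourhood of `H₁` with an `n`-neighbourhood of `H₂` lies in an `N`-neighbourhood of
`H₁ ⊓ H₂` (`exists_near_inf`).

For the cases inside `H = H₁` or `H = H₂`, a Morse subgroup is undistorted: a geodesic of the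
Cayley graph of `G` joining two elements of `H` stays near `H`, so its unit steps can be replaced
by steps from a finite subset of `H` (`undistorted_of_isMorse`). Hence the inclusion of `H` in `G`
carries quasi-geodesics of a Cayley graph of `H` to quasi-geodesics of a Cayley graph of `G`, the
ambient case applies to these, and the resulting bound is pulled back by undistortedness
(`stronglyQuasiconvex_subgroupOf`).

Strong quasiconvexity is quantified over all geometric models of the Cayley graph, so the second
step needs a model for `G` to exist. It is built by hand in `exists_geodesic_model`, as the
geometric realization of a graph, and it can be taken in `Type` because `G` is countable.
-/

open Metric Set Pointwise
open scoped ENNReal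

noncomputable section

/-- The `(K,C)`-quasi-isometric-embedding inequalities for a map `γ : ℝ → X`
restricted to a subset `s ⊆ ℝ`; for `s` an interval this is the notion of a
`(K,C)`-quasi-geodesic. -/
def QIEmbedOn {X : Type*} [MetricSpace X] (γ : ℝ → X) (s : Set ℝ) (K C : ℝ) : Prop :=
  ∀ a ∈ s, ∀ b ∈ s,
    (1 / K) * |a - b| - C ≤ dist (γ a) (γ b) ∧ dist (γ a) (γ b) ≤ K * |a - b| + C

/-- `Φ` is a `(K,L)`-quasi-isometric embedding. -/
def QIEmbeddingWith {A X : Type*} [MetricSpace A] [MetricSpace X] (Φ : A → X)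
    (K L : ℝ) : Prop :=
  1 ≤ K ∧ 0 ≤ L ∧ ∀ a b : A,
    (1 / K) * dist a b - L ≤ dist (Φ a) (Φ b) ∧ dist (Φ a) (Φ b) ≤ K * dist a b + L

/-- `Φ` is a quasi-isometric embedding. -/
def IsQIEmbedding {A X : Type*} [MetricSpace A] [MetricSpace X] (Φ : A → X) : Prop :=
  ∃ K L : ℝ, QIEmbeddingWith Φ K L

/-- A metric space is geodesic if every pair of points is joined by an isometrically
parametrized segment. -/
def IsGeodesicSpace (X : Type*) [MetricSpace X] : Prop :=
  ∀ x y : X, ∃ γ : ℝ → X, γ 0 = x ∧ γ (dist x y) = y ∧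
    ∀ s ∈ Icc (0 : ℝ) (dist x y), ∀ t ∈ Icc (0 : ℝ) (dist x y), dist (γ s) (γ t) = |s - t|

/-- A subset `A` is Morse: every `(K,C)`-quasi-geodesic with endpoints on `A` stays in a
uniform `M = M(K,C)` neighborhood of `A`. -/
def IsMorse {X : Type*} [MetricSpace X] (A : Set X) : Prop :=
  ∀ K C : ℝ, 1 ≤ K → 0 ≤ C → ∃ M : ℝ, 0 ≤ M ∧
    ∀ (γ : ℝ → X) (a b : ℝ), a ≤ b → QIEmbedOn γ (Icc a b) K C →
      γ a ∈ A → γ b ∈ A → ∀ t ∈ Icc a b, infDist (γ t) A ≤ M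

/-- `A` is Morse with the specific Morse gauge `N`. -/
def MorseWithGauge {X : Type*} [MetricSpace X] (A : Set X) (N : ℝ → ℝ → ℝ) : Prop :=
  ∀ K C : ℝ, 1 ≤ K → 0 ≤ C →
    ∀ (γ : ℝ → X) (a b : ℝ), a ≤ b → QIEmbedOn γ (Icc a b) K C →
      γ a ∈ A → γ b ∈ A → ∀ t ∈ Icc a b, infDist (γ t) A ≤ N K C

/-- A subset `A ⊆ X` is stable: any two `(K,L)`-quasi-geodesics with the same endpoints
on `A` are at uniformly bounded Hausdorff distance `R = R(K,L)`. -/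
def IsStableSubset {X : Type*} [MetricSpace X] (A : Set X) : Prop :=
  ∀ K L : ℝ, 1 ≤ K → 0 ≤ L → ∃ R : ℝ, 0 ≤ R ∧
    ∀ (γ γ' : ℝ → X) (a b a' b' : ℝ), a ≤ b → a' ≤ b' →
      QIEmbedOn γ (Icc a b) K L → QIEmbedOn γ' (Icc a' b') K L →
      γ a = γ' a' → γ b = γ' b' → γ a ∈ A → γ b ∈ A →
      hausdorffDist (γ '' Icc a b) (γ' '' Icc a' b') < R

/-- `s` is (the image of) a geodesic segment from `x` to `y`. -/
def IsGeodesicSegment {X : Type*} [MetricSpace X] (s : Set X) (x y : X) : Prop :=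
  ∃ γ : ℝ → X, γ 0 = x ∧ γ (dist x y) = y ∧ s = γ '' Icc 0 (dist x y) ∧
    ∀ u ∈ Icc (0 : ℝ) (dist x y), ∀ v ∈ Icc (0 : ℝ) (dist x y), dist (γ u) (γ v) = |u - v|

/-- `X` is (Gromov) hyperbolic: there is `δ ≥ 0` such that every geodesic triangle is
`δ`-thin (each side lies in the `δ`-neighborhood of the union of the other two sides). -/
def IsHyperbolic (X : Type*) [MetricSpace X] : Prop :=
  ∃ δ : ℝ, 0 ≤ δ ∧ ∀ x y z : X, ∀ s₁ s₂ s₃ : Set X,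
    IsGeodesicSegment s₁ x y → IsGeodesicSegment s₂ y z → IsGeodesicSegment s₃ x z →
    ∀ p ∈ s₃, infDist p (s₁ ∪ s₂) ≤ δ

/-- The induced length (pseudo)distance `d_r(x,y)` on the complement of the open
`r`-neighborhood of `A`: the infimum of lengths of paths from `x` to `y` staying at
distance at least `r` from `A` (with value `∞` if there is no such path). -/
def relPathDist {X : Type*} [MetricSpace X] (A : Set X) (r : ℝ) (x y : X) : ℝ≥0∞ :=
  ⨅ (γ : ℝ → X) (a : ℝ) (b : ℝ) (_ : a ≤ b) (_ : ContinuousOn γ (Icc a b))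
    (_ : γ a = x) (_ : γ b = y) (_ : ∀ t ∈ Icc a b, r ≤ infDist (γ t) A),
    eVariationOn γ (Icc a b)

/-- The lower relative divergence `σ^n_ρ(r)` of `X` with respect to `A`:
the infimum of `d_{ρr}(x,y)` over `x, y ∈ ∂N_r(A)` with `d_r(x,y) < ∞` and
`d(x,y) ≥ n r` (and `∞` if there is no such pair). -/
def lowerRelDiv {X : Type*} [MetricSpace X] (A : Set X) (n : ℕ) (ρ r : ℝ) : ℝ≥0∞ :=
  ⨅ (x : X) (y : X) (_ : infDist x A = r) (_ : infDist y A = r)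
    (_ : relPathDist A r x y ≠ ⊤) (_ : (n : ℝ) * r ≤ dist x y),
    relPathDist A (ρ * r) x y

/-- `f : [0,∞) → [0,∞]` is completely super linear: for each `C > 0` the set of `x ≥ 0`
with `f x ≤ C x` is bounded. -/
def CompletelySuperLinear (f : ℝ → ℝ≥0∞) : Prop :=
  ∀ C : ℝ, 0 < C → ∃ B : ℝ, ∀ x : ℝ, 0 ≤ x → f x ≤ ENNReal.ofReal (C * x) → x ≤ B

/-- A family `{σ^n_ρ}` is completely super linear if there is `n₀ ≥ 3` such that
`σ^{n₀}_ρ` is completely super linear for every `ρ ∈ (0,1]`. -/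
def FamilyCSL (σ : ℕ → ℝ → ℝ → ℝ≥0∞) : Prop :=
  ∃ n₀ : ℕ, 3 ≤ n₀ ∧ ∀ ρ : ℝ, 0 < ρ → ρ ≤ 1 → CompletelySuperLinear (σ n₀ ρ)

/-- `f` is dominated by `g` : `f(x) ≤ A g(Bx) + Cx` for all `x > D`. -/
def FunDominatedBy (f g : ℝ → ℝ≥0∞) : Prop :=
  ∃ A B C D : ℝ, 0 < A ∧ 0 < B ∧ 0 < C ∧ 0 < D ∧
    ∀ x : ℝ, D < x → f x ≤ ENNReal.ofReal A * g (B * x) + ENNReal.ofReal (C * x)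

/-- The quadratic function `r ↦ r²` viewed in `[0,∞]`. -/
def quadFun : ℝ → ℝ≥0∞ := fun r => ENNReal.ofReal (r ^ 2)

/-- The family `{σ^n_ρ}` dominates the function `f` (i.e. the constant family `f` is
dominated by `{σ^n_ρ}`): there are `L ∈ (0,1]` and a positive integer `M` such that
`f ≼ σ^{Mn}_ρ` for all `n ≥ 2`, `ρ ∈ (0,1]`. -/
def FamilyDominatesFun (σ : ℕ → ℝ → ℝ → ℝ≥0∞) (f : ℝ → ℝ≥0∞) : Prop :=
  ∃ (L : ℝ) (M : ℕ), 0 < L ∧ L ≤ 1 ∧ 0 < M ∧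
    ∀ n : ℕ, 2 ≤ n → ∀ ρ : ℝ, 0 < ρ → ρ ≤ 1 → FunDominatedBy f (σ (M * n) ρ)

/-- The family `{σ^n_ρ}` is dominated by the function `f`: there are `L ∈ (0,1]` and a
positive integer `M` such that `σ^n_{Lρ} ≼ f` for all `n ≥ 2`, `ρ ∈ (0,1]`. -/
def FamilyDominatedByFun (σ : ℕ → ℝ → ℝ → ℝ≥0∞) (f : ℝ → ℝ≥0∞) : Prop :=
  ∃ (L : ℝ) (M : ℕ), 0 < L ∧ L ≤ 1 ∧ 0 < M ∧
    ∀ n : ℕ, 2 ≤ n → ∀ ρ : ℝ, 0 < ρ → ρ ≤ 1 → FunDominatedBy (σ n (L * ρ)) f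

/-- The family is at least quadratic. -/
def FamilyAtLeastQuadratic (σ : ℕ → ℝ → ℝ → ℝ≥0∞) : Prop :=
  FamilyDominatesFun σ quadFun

/-- The family is (exactly) quadratic. -/
def FamilyQuadratic (σ : ℕ → ℝ → ℝ → ℝ≥0∞) : Prop :=
  FamilyDominatesFun σ quadFun ∧ FamilyDominatedByFun σ quadFun

/-- Word length of `g` with respect to a generating set `S` (letters from `S ∪ S⁻¹`). -/
def wordLength {G : Type*} [Group G] (S : Set G) (g : G) : ℕ :=
  sInf {n : ℕ | ∃ w : List G, w.length = n ∧ (∀ x ∈ w, x ∈ S ∨ x⁻¹ ∈ S) ∧ w.prod = g}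

/-- The word metric on `G` with respect to `S`. -/
def wordDist {G : Type*} [Group G] (S : Set G) (g h : G) : ℝ :=
  (wordLength S (g⁻¹ * h) : ℝ)

/-- The distance `d_S(g, A)` from `g` to a subset `A ⊆ G` in the word metric. -/
def wordDistToSet {G : Type*} [Group G] (S : Set G) (g : G) (A : Set G) : ℕ :=
  sInf {n : ℕ | ∃ a ∈ A, wordLength S (g⁻¹ * a) = n}

/-- `X`, together with the vertex map `ι : G → X`, is a geometric model for the Cayley
graph `Γ(G,S)`: `X` is geodesic, `ι` realizes the word metric on the vertex set, and every
point of `X` is within `1/2` of a vertex (as in the unit-edge-length Cayley graph). -/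
def CayleyModel (G : Type*) [Group G] (S : Set G) (X : Type*) [MetricSpace X]
    (ι : G → X) : Prop :=
  IsGeodesicSpace X ∧ (∀ g h : G, dist (ι g) (ι h) = wordDist S g h) ∧
    ∀ x : X, ∃ g : G, dist x (ι g) ≤ 1 / 2

/-- `H ≤ G` is strongly quasiconvex: `H` is a Morse subset of the Cayley graph of `G`
with respect to some (equivalently, any) finite generating set. -/
def StronglyQuasiconvex {G : Type*} [Group G] (H : Subgroup G) : Prop :=
  ∀ S : Set G, S.Finite → Subgroup.closure S = ⊤ →
    ∀ (X : Type) [MetricSpace X], ∀ ι : G → X, CayleyModel G S X ι →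
      IsMorse (ι '' (H : Set G))

/-- `H` is a finitely generated undistorted subgroup of `G` (with respect to the word
metric of the finite generating set `S` of `G`): the inclusion `(H,d_T) → (G,d_S)` is a
quasi-isometric embedding for some finite generating set `T` of `H`. -/
def Undistorted {G : Type*} [Group G] (S : Set G) (H : Subgroup G) : Prop :=
  ∃ T : Set H, T.Finite ∧ Subgroup.closure T = ⊤ ∧
    ∃ K L : ℝ, 1 ≤ K ∧ 0 ≤ L ∧ ∀ h₁ h₂ : H,
      (1 / K) * wordDist T h₁ h₂ - L ≤ wordDist S (h₁ : G) (h₂ : G) ∧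
      wordDist S (h₁ : G) (h₂ : G) ≤ K * wordDist T h₁ h₂ + L

/-- `H` is a stable subgroup of `G`: `H` is finitely generated and undistorted, and its
image in (a model `X` of) the Cayley graph `Γ(G,S)` is a stable subset. -/
def StableIn {G : Type*} [Group G] (S : Set G) (H : Subgroup G) (X : Type*)
    [MetricSpace X] (ι : G → X) : Prop :=
  Undistorted S H ∧ IsStableSubset (ι '' (H : Set G))

/-- A group is hyperbolic if its Cayley graph with respect to some (equivalently, any)
finite generating set is a hyperbolic geodesic space. -/
def IsHyperbolicGroup (H : Type*) [Group H] : Prop :=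
  ∀ T : Set H, T.Finite → Subgroup.closure T = ⊤ →
    ∀ (Y : Type) [MetricSpace Y], ∀ ι : H → Y, CayleyModel H T Y ι → IsHyperbolic Y

/-- A geodesic ray in `X` (isometric embedding of `[0,∞)`). -/
def IsGeodesicRay {X : Type*} [MetricSpace X] (γ : ℝ → X) : Prop :=
  ∀ s ∈ Ici (0 : ℝ), ∀ t ∈ Ici (0 : ℝ), dist (γ s) (γ t) = |s - t|

/-- `γ` restricted to `[a,b]` is a geodesic (isometric parametrization). -/
def IsGeodesicOn {X : Type*} [MetricSpace X] (γ : ℝ → X) (a b : ℝ) : Prop :=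
  ∀ s ∈ Icc a b, ∀ t ∈ Icc a b, dist (γ s) (γ t) = |s - t|

/-- `γ` is parametrized by arc length on `[a,b]`. -/
def ArcLengthParamOn {X : Type*} [MetricSpace X] (γ : ℝ → X) (a b : ℝ) : Prop :=
  ∀ s t : ℝ, a ≤ s → s ≤ t → t ≤ b → eVariationOn γ (Icc s t) = ENNReal.ofReal (t - s)

/-- Relations of a right-angled Coxeter group on a simplicial graph `Γ`. -/
def racgRels {V : Type} (Γ : SimpleGraph V) : Set (FreeGroup V) :=
  {rel | (∃ v : V, rel = FreeGroup.of v * FreeGroup.of v) ∨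
    (∃ v w : V, Γ.Adj v w ∧
      rel = FreeGroup.of v * FreeGroup.of w * (FreeGroup.of v)⁻¹ * (FreeGroup.of w)⁻¹)}

/-- The right-angled Coxeter group associated to a finite simplicial graph `Γ`. -/
abbrev RACG {V : Type} (Γ : SimpleGraph V) : Type := PresentedGroup (racgRels Γ)

/-- The standard generator of `RACG Γ` corresponding to a vertex. -/
def racgGen {V : Type} (Γ : SimpleGraph V) (v : V) : RACG Γ := PresentedGroup.of v

/-- Relations of a right-angled Artin group on a simplicial graph `Γ`. -/
def raagRels {V : Type} (Γ : SimpleGraph V) : Set (FreeGroup V) :=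
  {rel | ∃ v w : V, Γ.Adj v w ∧
    rel = FreeGroup.of v * FreeGroup.of w * (FreeGroup.of v)⁻¹ * (FreeGroup.of w)⁻¹}

/-- The right-angled Artin group associated to a finite simplicial graph `Γ`. -/
abbrev RAAG {V : Type} (Γ : SimpleGraph V) : Type := PresentedGroup (raagRels Γ)

/-- The standard generator of `RAAG Γ` corresponding to a vertex. -/
def raagGen {V : Type} (Γ : SimpleGraph V) (v : V) : RAAG Γ := PresentedGroup.of v

/-- `a b c d` (in this cyclic order) form an induced `4`-cycle of `Γ`. -/
def InducedFourCycle {V : Type} (Γ : SimpleGraph V) (a b c d : V) : Prop :=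
  a ≠ b ∧ a ≠ c ∧ a ≠ d ∧ b ≠ c ∧ b ≠ d ∧ c ≠ d ∧
  Γ.Adj a b ∧ Γ.Adj b c ∧ Γ.Adj c d ∧ Γ.Adj d a ∧ ¬ Γ.Adj a c ∧ ¬ Γ.Adj b d

/-! ### Word length -/

section WordLength

variable {G : Type*} [Group G] {S : Set G}

lemma wordLength_le {w : List G} (hw : ∀ x ∈ w, x ∈ S ∨ x⁻¹ ∈ S) :
    wordLength S w.prod ≤ w.length :=
  Nat.sInf_le ⟨w, rfl, hw, rfl⟩

lemma exists_word (hS : Subgroup.closure S = ⊤) (g : G) :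
    ∃ w : List G, w.length = wordLength S g ∧ (∀ x ∈ w, x ∈ S ∨ x⁻¹ ∈ S) ∧ w.prod = g := by
  have hg : g ∈ Subgroup.closure S := hS ▸ Subgroup.mem_top g
  rw [← Subgroup.mem_toSubmonoid, Subgroup.closure_toSubmonoid] at hg
  obtain ⟨w, hw, hp⟩ := Submonoid.exists_list_of_mem_closure hg
  exact Nat.sInf_mem (s := {n : ℕ | ∃ w : List G, w.length = n ∧
    (∀ x ∈ w, x ∈ S ∨ x⁻¹ ∈ S) ∧ w.prod = g}) ⟨_, w, rfl, hw, hp⟩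

lemma wordLength_one : wordLength S (1 : G) = 0 := by
  have := wordLength_le (S := S) (w := []) (by simp)
  simpa using this

lemma eq_one_of_wordLength (hS : Subgroup.closure S = ⊤) {g : G} (h : wordLength S g = 0) :
    g = 1 := by
  obtain ⟨w, hl, -, hp⟩ := exists_word hS g
  rw [h, List.length_eq_zero_iff] at hl
  simpa [hl] using hp.symm

lemma wordLength_mul (hS : Subgroup.closure S = ⊤) (g h : G) :
    wordLength S (g * h) ≤ wordLength S g + wordLength S h := by
  obtain ⟨w, hl, hw, hp⟩ := exists_word hS g
  obtain ⟨w', hl', hw', hp'⟩ := exists_word hS h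
  have := wordLength_le (S := S) (w := w ++ w') (by
    intro x hx
    rcases List.mem_append.1 hx with hx | hx
    exacts [hw x hx, hw' x hx])
  simpa [hp, hp', hl, hl'] using this

lemma wordLength_inv_le (hS : Subgroup.closure S = ⊤) (g : G) :
    wordLength S g⁻¹ ≤ wordLength S g := by
  obtain ⟨w, hl, hw, hp⟩ := exists_word hS g
  have := wordLength_le (S := S) (w := (w.map (·⁻¹)).reverse) (by
    intro x hx
    simp only [List.mem_reverse, List.mem_map] at hx
    obtain ⟨y, hy, rfl⟩ := hx
    rcases hw y hy with h | h
    · right; simpa using h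
    · left; exact h)
  rw [← List.prod_inv_reverse, hp] at this
  simpa [hl] using this

lemma wordLength_inv (hS : Subgroup.closure S = ⊤) (g : G) :
    wordLength S g⁻¹ = wordLength S g :=
  le_antisymm (wordLength_inv_le hS g) (by simpa using wordLength_inv_le hS g⁻¹)

/-- A nontrivial element splits off a first letter. -/
lemma exists_step (hS : Subgroup.closure S = ⊤) {g : G} {n : ℕ} (h : wordLength S g = n + 1) :
    ∃ s : G, (s ∈ S ∨ s⁻¹ ∈ S) ∧ wordLength S (s⁻¹ * g) ≤ n := by
  obtain ⟨w, hl, hw, hp⟩ := exists_word hS g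
  rw [h] at hl
  match w, hl with
  | s :: w, hl =>
    refine ⟨s, hw s (by simp), ?_⟩
    have := wordLength_le (S := S) (w := w) (fun x hx => hw x (by simp [hx]))
    rw [List.prod_cons] at hp
    rw [← hp, inv_mul_cancel_left]
    simp only [List.length_cons, Nat.add_right_cancel_iff] at hl
    omega

lemma wordLength_letter {s : G} (hs : s ∈ S ∨ s⁻¹ ∈ S) : wordLength S s ≤ 1 := by
  have := wordLength_le (S := S) (w := [s]) (by simpa using hs)
  simpa using this

lemma finite_ball (hS : Subgroup.closure S = ⊤) (hfin : S.Finite) (n : ℕ) :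
    {g : G | wordLength S g ≤ n}.Finite := by
  induction n with
  | zero =>
    refine (Set.finite_singleton (1 : G)).subset fun g hg => ?_
    exact eq_one_of_wordLength hS (Nat.le_zero.1 hg)
  | succ n ih =>
    refine (ih.union ((hfin.union hfin.inv).mul ih)).subset fun g hg => ?_
    rcases Nat.lt_or_ge n (wordLength S g) with h | h
    · right
      have hg' : wordLength S g ≤ n + 1 := hg
      obtain ⟨s, hs, hs'⟩ := exists_step hS (g := g) (n := n) (by omega)
      exact Set.mem_mul.2 ⟨s, by simpa using hs, s⁻¹ * g, hs', by group⟩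
    · exact Or.inl h

lemma countable_of_fg (hS : Subgroup.closure S = ⊤) (hfin : S.Finite) : Countable G := by
  rw [← Set.countable_univ_iff]
  refine (Set.countable_iUnion fun n => (finite_ball hS hfin n).countable).mono fun g _ => ?_
  exact Set.mem_iUnion.2 ⟨wordLength S g, le_refl (wordLength S g)⟩

lemma exists_bound {α : Type*} {F : Set α} (hF : F.Finite) (f : α → ℕ) :
    ∃ N : ℕ, ∀ x ∈ F, f x ≤ N := by
  obtain ⟨N, hN⟩ := (hF.image f).bddAbove
  exact ⟨N, fun x hx => hN (Set.mem_image_of_mem f hx)⟩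

/-- Elements close to both `H₁` and `H₂` are close to `H₁ ⊓ H₂`: such an element `g` satisfies
`g * a ∈ H₁` and `g * b ∈ H₂` for one of finitely many pairs `(a, b)`, and two elements with the
same pair differ by left multiplication by an element of `H₁ ⊓ H₂`. -/
lemma exists_near_inf (hS : Subgroup.closure S = ⊤) (hfin : S.Finite) (H₁ H₂ : Subgroup G)
    (n : ℕ) : ∃ N : ℕ, ∀ g : G, (∃ h ∈ H₁, wordLength S (g⁻¹ * h) ≤ n) →
      (∃ h ∈ H₂, wordLength S (g⁻¹ * h) ≤ n) → ∃ k ∈ H₁ ⊓ H₂, wordLength S (g⁻¹ * k) ≤ N := by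
  have key : ∀ p : G × G, ∃ m : ℕ, ∀ g : G, g * p.1 ∈ H₁ → g * p.2 ∈ H₂ →
      ∃ k ∈ H₁ ⊓ H₂, wordLength S (g⁻¹ * k) ≤ m := by
    rintro ⟨a, b⟩
    by_cases h : ∃ g₀ : G, g₀ * a ∈ H₁ ∧ g₀ * b ∈ H₂
    · obtain ⟨g₀, ha, hb⟩ := h
      refine ⟨wordLength S g₀⁻¹, fun g ha' hb' => ⟨g * g₀⁻¹, ⟨?_, ?_⟩, by simp⟩⟩
      · have := H₁.mul_mem ha' (H₁.inv_mem ha)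
        simpa [mul_assoc] using this
      · have := H₂.mul_mem hb' (H₂.inv_mem hb)
        simpa [mul_assoc] using this
    · exact ⟨0, fun g ha hb => absurd ⟨g, ha, hb⟩ h⟩
  choose m hm using key
  obtain ⟨N, hN⟩ := exists_bound ((finite_ball hS hfin n).prod (finite_ball hS hfin n)) m
  refine ⟨N, ?_⟩
  rintro g ⟨x, hx, hxn⟩ ⟨y, hy, hyn⟩
  obtain ⟨k, hk, hkm⟩ := hm (g⁻¹ * x, g⁻¹ * y) g (by simpa using hx) (by simpa using hy)
  exact ⟨k, hk, hkm.trans (hN _ ⟨hxn, hyn⟩)⟩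

/-- A finitely generated subgroup is Lipschitz-embedded. -/
lemma exists_lipschitz (hS : Subgroup.closure S = ⊤) {H : Subgroup G} {T : Set H}
    (hT : Subgroup.closure T = ⊤) (hfin : T.Finite) :
    ∃ A : ℕ, ∀ h : H, wordLength S (h : G) ≤ A * wordLength T h := by
  obtain ⟨A, hA⟩ := exists_bound (hfin.union hfin.inv) (fun h : H => wordLength S (h : G))
  refine ⟨A, ?_⟩
  have : ∀ n : ℕ, ∀ h : H, wordLength T h = n → wordLength S (h : G) ≤ A * n := by
    intro n
    induction n using Nat.strong_induction_on with
    | _ n ih =>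
      intro h hn
      cases n with
      | zero => simp [eq_one_of_wordLength hT hn, wordLength_one]
      | succ n =>
        obtain ⟨s, hs, hs'⟩ := exists_step hT hn
        have h1 := ih _ (Nat.lt_succ_of_le hs') (s⁻¹ * h) rfl
        have h2 : wordLength S (s : G) ≤ A := hA s (by simpa using hs)
        have h3 := wordLength_mul hS (s : G) ((s⁻¹ * h : H) : G)
        have h4 : A * wordLength T (s⁻¹ * h) ≤ A * n := Nat.mul_le_mul_left _ hs'
        have h5 : (s : G) * ((s⁻¹ * h : H) : G) = h := by simp
        rw [h5] at h3
        rw [Nat.mul_succ]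
        omega
  exact fun h => this _ h rfl

end WordLength

/-! ### Subgroups with Morse image in a Cayley model -/

section Morse

variable {G : Type*} [Group G] {S : Set G} {X : Type*} [MetricSpace X] {ι : G → X}

lemma exists_near_of_infDist {H : Subgroup G} {x : X} {M : ℝ}
    (h : infDist x (ι '' (H : Set G)) ≤ M) : ∃ k ∈ H, dist x (ι k) < M + 1 := by
  have hne : (ι '' (H : Set G)).Nonempty := ⟨ι 1, 1, H.one_mem, rfl⟩
  obtain ⟨_, ⟨k, hk, rfl⟩, hd⟩ := (infDist_lt_iff hne).1 (lt_of_le_of_lt h (lt_add_one M))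
  exact ⟨k, hk, hd⟩

lemma isMorse_inf (hS : Subgroup.closure S = ⊤) (hfin : S.Finite) (hX : CayleyModel G S X ι)
    {H₁ H₂ : Subgroup G} (h₁ : IsMorse (ι '' (H₁ : Set G))) (h₂ : IsMorse (ι '' (H₂ : Set G))) :
    IsMorse (ι '' ((H₁ ⊓ H₂ : Subgroup G) : Set G)) := by
  obtain ⟨-, hd, hnear⟩ := hX
  intro K C hK hC
  obtain ⟨M₁, -, hM₁⟩ := h₁ K C hK hC
  obtain ⟨M₂, -, hM₂⟩ := h₂ K C hK hC
  obtain ⟨N, hN⟩ := exists_near_inf hS hfin H₁ H₂ (⌈max M₁ M₂ + 2⌉₊)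
  refine ⟨1 / 2 + N, by positivity, ?_⟩
  rintro γ a b hab hγ ⟨u, hu, hua⟩ ⟨v, hv, hvb⟩ t ht
  obtain ⟨g, hg⟩ := hnear (γ t)
  have close : ∀ (H : Subgroup G) (M : ℝ), M ≤ max M₁ M₂ →
      infDist (γ t) (ι '' (H : Set G)) ≤ M →
      ∃ h ∈ H, wordLength S (g⁻¹ * h) ≤ ⌈max M₁ M₂ + 2⌉₊ := by
    intro H M hM h
    obtain ⟨k, hk, hkd⟩ := exists_near_of_infDist h
    refine ⟨k, hk, ?_⟩
    have h1 := dist_triangle_left (ι g) (ι k) (γ t)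
    rw [hd, wordDist] at h1
    have h2 := Nat.le_ceil (max M₁ M₂ + 2)
    exact_mod_cast (show (wordLength S (g⁻¹ * k) : ℝ) ≤ ⌈max M₁ M₂ + 2⌉₊ by linarith)
  obtain ⟨k, hk, hkN⟩ := hN g
    (close H₁ M₁ (le_max_left _ _)
      (hM₁ γ a b hab hγ ⟨u, hu.1, hua⟩ ⟨v, hv.1, hvb⟩ t ht))
    (close H₂ M₂ (le_max_right _ _)
      (hM₂ γ a b hab hγ ⟨u, hu.2, hua⟩ ⟨v, hv.2, hvb⟩ t ht))
  have hk' : ι k ∈ ι '' ((H₁ ⊓ H₂ : Subgroup G) : Set G) := ⟨k, hk, rfl⟩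
  refine (infDist_le_dist_of_mem hk').trans ?_
  have h1 := dist_triangle (γ t) (ι g) (ι k)
  rw [hd g k, wordDist] at h1
  have h2 : (wordLength S (g⁻¹ * k) : ℝ) ≤ N := by exact_mod_cast hkN
  linarith

/-- A Morse subgroup is undistorted. -/
lemma undistorted_of_isMorse (hS : Subgroup.closure S = ⊤) (hfin : S.Finite)
    (hX : CayleyModel G S X ι) {H : Subgroup G} (hH : IsMorse (ι '' (H : Set G)))
    {T : Set H} (hT : Subgroup.closure T = ⊤) :
    ∃ A : ℕ, ∀ h : H, wordLength T h ≤ A * (wordLength S (h : G) + 1) := by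
  obtain ⟨hgeo, hd, -⟩ := hX
  obtain ⟨M, hM0, hM⟩ := hH 1 0 le_rfl le_rfl
  have hF : {h : H | wordLength S (h : G) ≤ ⌈2 * M + 3⌉₊}.Finite :=
    (finite_ball hS hfin _).preimage Subtype.val_injective.injOn
  obtain ⟨A, hA⟩ := exists_bound hF (fun h => wordLength T h)
  have hA' : ∀ h : H, (wordLength S (h : G) : ℝ) ≤ 2 * M + 3 → wordLength T h ≤ A := by
    intro h hh
    refine hA h ?_
    have := Nat.le_ceil (2 * M + 3)
    exact_mod_cast hh.trans this
  refine ⟨A, fun h => ?_⟩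
  obtain ⟨γ, hγ0, hγ1, hγ⟩ := hgeo (ι 1) (ι h)
  have hL : dist (ι 1) (ι h) = wordLength S (h : G) := by rw [hd, wordDist]; simp
  rw [hL] at hγ1 hγ
  have hQ : QIEmbedOn γ (Icc 0 (wordLength S (h : G) : ℝ)) 1 0 := by
    intro s hs t ht
    rw [hγ s hs t ht]
    constructor <;> linarith
  have hnear := hM γ 0 _ (Nat.cast_nonneg _) hQ (hγ0 ▸ ⟨1, H.one_mem, rfl⟩)
    (hγ1 ▸ ⟨h, h.2, rfl⟩)
  -- Walk along the geodesic in unit steps, keeping an element of `H` within `M + 1`.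
  have walk : ∀ i : ℕ, i ≤ wordLength S (h : G) → ∀ k : H, dist (γ i) (ι k) ≤ M + 1 →
      wordLength T k ≤ A * (i + 1) := by
    intro i
    induction i with
    | zero =>
      intro _ k hk
      rw [Nat.cast_zero, hγ0, hd, wordDist, inv_one, one_mul] at hk
      simpa using hA' k (by linarith)
    | succ i ih =>
      intro hi k hk
      have hi' : (i : ℝ) + 1 ≤ wordLength S (h : G) := by exact_mod_cast hi
      have hi0 : (0 : ℝ) ≤ i := Nat.cast_nonneg i
      have hmem : (i : ℝ) ∈ Icc (0 : ℝ) (wordLength S (h : G)) := ⟨hi0, by linarith⟩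
      obtain ⟨k', hk', hd'⟩ := exists_near_of_infDist (hnear i hmem)
      have h1 := ih (by omega) ⟨k', hk'⟩ hd'.le
      have h2 := hγ i hmem ((i : ℝ) + 1) ⟨by linarith, hi'⟩
      have h3 : |(i : ℝ) - (i + 1)| = 1 := by norm_num
      push_cast at hk
      have h4 := dist_triangle4 (ι k') (γ i) (γ ((i : ℝ) + 1)) (ι k)
      rw [dist_comm (ι k') (γ i), hd, wordDist] at h4
      have h5 := hA' (⟨k', hk'⟩⁻¹ * k) (by push_cast; linarith)
      have h6 := wordLength_mul hT ⟨k', hk'⟩ (⟨k', hk'⟩⁻¹ * k)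
      rw [mul_inv_cancel_left] at h6
      rw [Nat.mul_succ]
      omega
  exact walk _ le_rfl h (by rw [hγ1, dist_self]; linarith)

end Morse

/-! ### Existence of Cayley models -/

/-- An integer-valued pseudometric such that positive distances are realized by chains of points
at mutual distance at most one, i.e. the path metric of a connected graph. -/
structure IsGraphDist {V : Type*} (d : V → V → ℕ) : Prop where
  self : ∀ x, d x x = 0
  symm : ∀ x y, d x y = d y x
  triangle : ∀ x y z, d x z ≤ d x y + d y z
  step : ∀ x y n, d x y = n + 1 → ∃ z, d x z ≤ 1 ∧ d z y ≤ n

/-- A point at position `t` of a unit edge from `u` to `v`. Edges are oriented, and loops are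
allowed; the extra edges this creates do not affect distances between vertices, and loops
provide an edge through every vertex. -/
structure EdgePt {V : Type} (d : V → V → ℕ) where
  u : V
  v : V
  t : ℝ
  adj : d u v ≤ 1
  nonneg : 0 ≤ t
  le_one : t ≤ 1

namespace EdgePt

variable {V : Type} {d : V → V → ℕ}

/-- Distance from a point of the graph to a vertex. -/
def toVertex (p : EdgePt d) (h : V) : ℝ := min (p.t + d p.u h) (1 - p.t + d p.v h)

/-- Least length of a path between two points of the graph that passes through a vertex. -/
def viaVertex (p q : EdgePt d) : ℝ := min (p.t + q.toVertex p.u) (1 - p.t + q.toVertex p.v)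

open Classical in
/-- The path metric on the graph. The direct path along an edge need not be the shortest one
between points of that edge, because the edge may be a loop. -/
def gdist (p q : EdgePt d) : ℝ :=
  if p.u = q.u ∧ p.v = q.v then min |p.t - q.t| (viaVertex p q) else viaVertex p q

lemma toVertex_nonneg (p : EdgePt d) (h : V) : 0 ≤ p.toVertex h :=
  le_min (add_nonneg p.nonneg (Nat.cast_nonneg _))
    (add_nonneg (sub_nonneg.2 p.le_one) (Nat.cast_nonneg _))

lemma toVertex_lip (hd : IsGraphDist d) (p : EdgePt d) (h k : V) :
    p.toVertex h ≤ p.toVertex k + d k h := by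
  have h1 : (d p.u h : ℝ) ≤ d p.u k + d k h := by exact_mod_cast hd.triangle _ _ _
  have h2 : (d p.v h : ℝ) ≤ d p.v k + d k h := by exact_mod_cast hd.triangle _ _ _
  unfold toVertex
  rcases min_choice (p.t + (d p.u k : ℝ)) (1 - p.t + d p.v k) with e | e <;> rw [e]
  · exact (min_le_left _ _).trans (by linarith)
  · exact (min_le_right _ _).trans (by linarith)

lemma le_toVertex_add (hd : IsGraphDist d) (p : EdgePt d) (h k : V) :
    (d h k : ℝ) ≤ p.toVertex h + p.toVertex k := by
  have ht := p.nonneg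
  have ht' := p.le_one
  have a1 : (d p.u p.v : ℝ) ≤ 1 := by exact_mod_cast p.adj
  have tri : ∀ x y z, (d x z : ℝ) ≤ d x y + d y z := fun x y z => by
    exact_mod_cast hd.triangle x y z
  have b1 := tri h p.u k
  have b2 := tri h p.v k
  have b3 := tri h p.u p.v
  have b4 := tri p.u p.v k
  have b5 := tri p.v p.u k
  have b6 := tri h p.v p.u
  rw [hd.symm h p.u] at b1 b3
  rw [hd.symm h p.v] at b2 b6
  rw [hd.symm h p.u] at b6
  rw [hd.symm h p.v] at b3
  rw [hd.symm p.v p.u] at b5 b6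
  unfold toVertex
  rcases min_choice (p.t + (d p.u k : ℝ)) (1 - p.t + d p.v k) with e | e <;>
  rcases min_choice (p.t + (d p.u h : ℝ)) (1 - p.t + d p.v h) with e' | e' <;>
  rw [e, e'] <;> linarith

lemma toVertex_edge {p q : EdgePt d} (hu : p.u = q.u) (hv : p.v = q.v) (h : V) :
    p.toVertex h ≤ |p.t - q.t| + q.toVertex h := by
  have h1 := le_abs_self (p.t - q.t)
  have h2 := neg_abs_le (p.t - q.t)
  unfold toVertex
  rw [hu, hv]
  rcases min_choice (q.t + (d q.u h : ℝ)) (1 - q.t + d q.v h) with e | e <;> rw [e]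
  · exact (min_le_left _ _).trans (by linarith)
  · exact (min_le_right _ _).trans (by linarith)

lemma viaVertex_le (hd : IsGraphDist d) (p q : EdgePt d) (h : V) :
    viaVertex p q ≤ p.toVertex h + q.toVertex h := by
  have h1 := toVertex_lip hd q p.u h
  have h2 := toVertex_lip hd q p.v h
  rw [hd.symm] at h1 h2
  unfold viaVertex
  rw [toVertex.eq_def p h]
  rcases min_choice (p.t + (d p.u h : ℝ)) (1 - p.t + d p.v h) with e | e <;> rw [e]
  · exact (min_le_left _ _).trans (by linarith)
  · exact (min_le_right _ _).trans (by linarith)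

lemma toVertex_u (hd : IsGraphDist d) (p : EdgePt d) : p.toVertex p.u ≤ p.t :=
  (min_le_left _ _).trans (by simp [hd.self])

lemma toVertex_v (hd : IsGraphDist d) (p : EdgePt d) : p.toVertex p.v ≤ 1 - p.t :=
  (min_le_right _ _).trans (by simp [hd.self])

lemma exists_viaVertex (hd : IsGraphDist d) (p q : EdgePt d) :
    ∃ h, viaVertex p q = p.toVertex h + q.toVertex h := by
  rcases min_choice (p.t + q.toVertex p.u) (1 - p.t + q.toVertex p.v) with e | e
  · refine ⟨p.u, le_antisymm (viaVertex_le hd p q _) ?_⟩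
    rw [viaVertex, e]
    linarith [toVertex_u hd p]
  · refine ⟨p.v, le_antisymm (viaVertex_le hd p q _) ?_⟩
    rw [viaVertex, e]
    linarith [toVertex_v hd p]

lemma gdist_le_via (p q : EdgePt d) : gdist p q ≤ viaVertex p q := by
  unfold gdist
  split_ifs
  · exact min_le_right _ _
  · exact le_rfl

lemma gdist_le_edge {p q : EdgePt d} (hu : p.u = q.u) (hv : p.v = q.v) :
    gdist p q ≤ |p.t - q.t| := by
  unfold gdist
  rw [if_pos ⟨hu, hv⟩]
  exact min_le_left _ _

lemma gdist_cases (p q : EdgePt d) :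
    gdist p q = viaVertex p q ∨ (p.u = q.u ∧ p.v = q.v ∧ gdist p q = |p.t - q.t|) := by
  unfold gdist
  split_ifs with h
  · rcases min_choice |p.t - q.t| (viaVertex p q) with e | e
    · exact Or.inr ⟨h.1, h.2, e⟩
    · exact Or.inl e
  · exact Or.inl rfl

lemma gdist_nonneg (hd : IsGraphDist d) (p q : EdgePt d) : 0 ≤ gdist p q := by
  rcases gdist_cases p q with e | ⟨-, -, e⟩ <;> rw [e]
  · obtain ⟨h, e⟩ := exists_viaVertex hd p q
    rw [e]
    exact add_nonneg (toVertex_nonneg _ _) (toVertex_nonneg _ _)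
  · exact abs_nonneg _

lemma gdist_symm_le (hd : IsGraphDist d) (p q : EdgePt d) : gdist p q ≤ gdist q p := by
  rcases gdist_cases q p with e | ⟨hu, hv, e⟩ <;> rw [e]
  · obtain ⟨h, e⟩ := exists_viaVertex hd q p
    rw [e, add_comm]
    exact (gdist_le_via _ _).trans (viaVertex_le hd _ _ _)
  · rw [abs_sub_comm]
    exact gdist_le_edge hu.symm hv.symm

lemma gdist_triangle (hd : IsGraphDist d) (p q r : EdgePt d) :
    gdist p r ≤ gdist p q + gdist q r := by
  rcases gdist_cases p q with e | ⟨hu, hv, e⟩ <;>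
  rcases gdist_cases q r with e' | ⟨hu', hv', e'⟩ <;> rw [e, e']
  · obtain ⟨h, e⟩ := exists_viaVertex hd p q
    obtain ⟨k, e'⟩ := exists_viaVertex hd q r
    have h1 := (gdist_le_via _ _).trans (viaVertex_le hd p r k)
    have h2 := toVertex_lip hd p k h
    have h3 := le_toVertex_add hd q h k
    linarith
  · obtain ⟨h, e⟩ := exists_viaVertex hd p q
    have h1 := (gdist_le_via _ _).trans (viaVertex_le hd p r h)
    have h2 := toVertex_edge hu'.symm hv'.symm h
    rw [abs_sub_comm] at h2
    linarith
  · obtain ⟨h, e⟩ := exists_viaVertex hd q r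
    have h1 := (gdist_le_via _ _).trans (viaVertex_le hd p r h)
    have h2 := toVertex_edge hu hv h
    linarith
  · exact (gdist_le_edge (hu.trans hu') (hv.trans hv')).trans (abs_sub_le _ _ _)

/-- The pseudometric structure on the points of the graph; the different names of a vertex are
at distance zero from each other. -/
@[reducible] def pseudoMetric (hd : IsGraphDist d) : PseudoMetricSpace (EdgePt d) where
  dist := gdist
  dist_self p := le_antisymm (by simpa using gdist_le_edge (p := p) (q := p) rfl rfl)
    (gdist_nonneg hd p p)
  dist_comm p q := le_antisymm (gdist_symm_le hd p q) (gdist_symm_le hd q p)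
  dist_triangle := gdist_triangle hd

/-- A vertex as a point of the graph, lying on its loop. -/
def vertex (hd : IsGraphDist d) (g : V) : EdgePt d :=
  ⟨g, g, 0, by simp [hd.self], le_rfl, zero_le_one⟩

lemma toVertex_vertex (hd : IsGraphDist d) (g h : V) : (vertex hd g).toVertex h = d g h := by
  simp [toVertex, vertex]

lemma gdist_vertex_right (hd : IsGraphDist d) (p : EdgePt d) (h : V) :
    gdist p (vertex hd h) ≤ p.toVertex h := by
  have := (gdist_le_via _ _).trans (viaVertex_le hd p (vertex hd h) h)
  rwa [toVertex_vertex, hd.self, Nat.cast_zero, add_zero] at this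

lemma gdist_vertex (hd : IsGraphDist d) (g h : V) :
    gdist (vertex hd g) (vertex hd h) = d g h := by
  refine le_antisymm ((gdist_vertex_right hd _ h).trans (toVertex_vertex hd g h).le) ?_
  rcases gdist_cases (vertex hd g) (vertex hd h) with e | ⟨hu, -, -⟩
  · obtain ⟨k, e'⟩ := exists_viaVertex hd (vertex hd g) (vertex hd h)
    rw [e, e', toVertex_vertex, toVertex_vertex, hd.symm h k]
    exact_mod_cast hd.triangle g k h
  · have : g = h := hu
    subst this
    rw [hd.self]
    simpa using gdist_nonneg hd (vertex hd g) (vertex hd g)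

end EdgePt

/-- `x` and `y` are joined by a 1-Lipschitz path of duration `L`. -/
def LipJoin {X : Type*} [MetricSpace X] (x y : X) (L : ℝ) : Prop :=
  0 ≤ L ∧ ∃ γ : ℝ → X, γ 0 = x ∧ γ L = y ∧
    ∀ s ∈ Icc (0 : ℝ) L, ∀ t ∈ Icc (0 : ℝ) L, dist (γ s) (γ t) ≤ |s - t|

namespace LipJoin

variable {X : Type*} [MetricSpace X] {x y z : X} {L L' : ℝ}

lemma refl (x : X) : LipJoin x x 0 :=
  ⟨le_rfl, fun _ => x, rfl, rfl, fun s _ t _ => by simp⟩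

lemma symm (h : LipJoin x y L) : LipJoin y x L := by
  obtain ⟨hL, γ, h0, h1, hl⟩ := h
  refine ⟨hL, fun s => γ (L - s), by simpa using h1, by simpa using h0, fun s hs t ht => ?_⟩
  have := hl (L - s) ⟨by linarith [hs.2], by linarith [hs.1]⟩ (L - t)
    ⟨by linarith [ht.2], by linarith [ht.1]⟩
  rwa [show L - s - (L - t) = t - s by ring, abs_sub_comm] at this

lemma trans (h : LipJoin x y L) (h' : LipJoin y z L') : LipJoin x z (L + L') := by
  obtain ⟨hL, γ, h0, h1, hl⟩ := h
  obtain ⟨hL', γ', h0', h1', hl'⟩ := h'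
  let δ : ℝ → X := fun s => if s ≤ L then γ s else γ' (s - L)
  have hδ : ∀ s, L ≤ s → δ s = γ' (s - L) := by
    intro s hs
    rcases hs.eq_or_lt with rfl | hs
    · simp [δ, h1, h0']
    · simp [δ, not_le.2 hs]
  have hδ' : ∀ s, s ≤ L → δ s = γ s := fun s hs => by simp [δ, hs]
  refine ⟨add_nonneg hL hL', δ, by rw [hδ' _ hL, h0], by rw [hδ _ (by linarith)]; simpa using h1',
    ?_⟩
  have main : ∀ s ∈ Icc (0 : ℝ) (L + L'), ∀ t ∈ Icc (0 : ℝ) (L + L'), s ≤ t →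
      dist (δ s) (δ t) ≤ |s - t| := by
    intro s hs t ht hst
    rcases le_total t L with htL | htL
    · rw [hδ' _ htL, hδ' _ (hst.trans htL)]
      exact hl _ ⟨hs.1, hst.trans htL⟩ _ ⟨ht.1, htL⟩
    · have htm : t - L ∈ Icc (0 : ℝ) L' := ⟨by linarith, by linarith [ht.2]⟩
      rcases le_total s L with hsL | hsL
      · rw [hδ' _ hsL, hδ _ htL]
        have a1 := hl s ⟨hs.1, hsL⟩ L ⟨hL, le_rfl⟩
        have a2 := hl' 0 ⟨le_rfl, hL'⟩ (t - L) htm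
        rw [h1] at a1
        rw [h0'] at a2
        rw [abs_of_nonpos (by linarith)] at a1 a2 ⊢
        linarith [dist_triangle (γ s) y (γ' (t - L))]
      · rw [hδ _ hsL, hδ _ htL]
        have := hl' (s - L) ⟨by linarith, by linarith [hs.2]⟩ (t - L) htm
        rwa [show s - L - (t - L) = s - t by ring] at this
  intro s hs t ht
  rcases le_total s t with h | h
  · exact main s hs t ht h
  · rw [dist_comm, abs_sub_comm]
    exact main t ht s hs h

/-- A 1-Lipschitz path whose duration is the distance between its endpoints is a geodesic. -/
lemma geodesic (h : LipJoin x y (dist x y)) : ∃ γ : ℝ → X, γ 0 = x ∧ γ (dist x y) = y ∧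
    ∀ s ∈ Icc (0 : ℝ) (dist x y), ∀ t ∈ Icc (0 : ℝ) (dist x y), dist (γ s) (γ t) = |s - t| := by
  obtain ⟨hL, γ, h0, h1, hl⟩ := h
  have main : ∀ s ∈ Icc (0 : ℝ) (dist x y), ∀ t ∈ Icc (0 : ℝ) (dist x y), s ≤ t →
      dist (γ s) (γ t) = |s - t| := by
    intro s hs t ht hst
    refine le_antisymm (hl s hs t ht) ?_
    have a1 := hl 0 ⟨le_rfl, hL⟩ s hs
    have a2 := hl t ht _ ⟨hL, le_rfl⟩
    have a3 := dist_triangle4 (γ 0) (γ s) (γ t) (γ (dist x y))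
    rw [h1] at a2 a3
    rw [h0] at a1 a3
    rw [abs_of_nonpos (by linarith [hs.1])] at a1
    rw [abs_of_nonpos (by linarith [ht.2])] at a2
    rw [abs_of_nonpos (by linarith)]
    linarith
  refine ⟨γ, h0, h1, fun s hs t ht => ?_⟩
  rcases le_total s t with h | h
  · exact main s hs t ht h
  · rw [dist_comm, abs_sub_comm]
    exact main t ht s hs h

end LipJoin

/-- The geometric realization of a graph: the metric quotient of `EdgePt d`. -/
lemma exists_geodesic_model {V : Type} {d : V → V → ℕ} (hd : IsGraphDist d) :
    ∃ (X : Type) (_ : MetricSpace X) (ι : V → X), IsGeodesicSpace X ∧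
      (∀ g h, dist (ι g) (ι h) = d g h) ∧ ∀ x, ∃ g, dist x (ι g) ≤ 1 / 2 := by
  let := EdgePt.pseudoMetric hd
  let m : EdgePt d → SeparationQuotient (EdgePt d) := SeparationQuotient.mk
  have hm : ∀ p q, dist (m p) (m q) = EdgePt.gdist p q := fun p q =>
    SeparationQuotient.dist_mk p q
  let ι : V → SeparationQuotient (EdgePt d) := fun g => m (EdgePt.vertex hd g)
  have eq_vertex : ∀ p : EdgePt d, ∀ h, p.toVertex h ≤ 0 → m p = ι h := fun p h hp => by
    refine dist_le_zero.1 ?_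
    rw [hm]
    exact (EdgePt.gdist_vertex_right hd p h).trans hp
  have join_edge_le : ∀ p q : EdgePt d, p.u = q.u → p.v = q.v → p.t ≤ q.t →
      LipJoin (m p) (m q) (q.t - p.t) := by
    rintro ⟨u, v, t, huv, ht0, ht1⟩ ⟨u', v', t', huv', ht0', ht1'⟩ hu hv hle
    dsimp only at hu hv hle ⊢
    subst hu hv
    let c : ℝ → EdgePt d := fun s => ⟨u, v, max 0 (min 1 (t + s)), huv, le_max_left _ _,
      max_le zero_le_one (min_le_left _ _)⟩
    have hc : ∀ s ∈ Icc (0 : ℝ) (t' - t), (c s).t = t + s := fun s hs => by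
      change max 0 (min 1 (t + s)) = t + s
      rw [min_eq_right (by linarith [hs.2]), max_eq_right (by linarith [hs.1])]
    refine ⟨by linarith, fun s => m (c s), ?_, ?_, fun s hs r hr => ?_⟩
    · refine congrArg m ?_
      simp only [c, EdgePt.mk.injEq, true_and]
      exact (hc 0 ⟨le_rfl, by linarith⟩).trans (add_zero t)
    · refine congrArg m ?_
      simp only [c, EdgePt.mk.injEq, true_and]
      exact (hc (t' - t) ⟨by linarith, le_rfl⟩).trans (add_sub_cancel t t')
    · rw [hm]
      refine (EdgePt.gdist_le_edge (p := c s) (q := c r) rfl rfl).trans ?_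
      rw [hc s hs, hc r hr, add_sub_add_left_eq_sub]
  have join_edge : ∀ p q : EdgePt d, p.u = q.u → p.v = q.v →
      LipJoin (m p) (m q) |p.t - q.t| := by
    intro p q hu hv
    rcases le_total p.t q.t with h | h
    · rw [abs_sub_comm, abs_of_nonneg (by linarith)]
      exact join_edge_le p q hu hv h
    · rw [abs_of_nonneg (by linarith)]
      exact (join_edge_le q p hu.symm hv.symm h).symm
  have join_u : ∀ p : EdgePt d, LipJoin (m p) (ι p.u) p.t := by
    intro p
    let q : EdgePt d := ⟨p.u, p.v, 0, p.adj, le_rfl, zero_le_one⟩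
    have h1 := join_edge p q rfl rfl
    have h2 : m q = ι p.u := eq_vertex q _ (EdgePt.toVertex_u hd q)
    rwa [h2, show p.t - q.t = p.t from sub_zero _, abs_of_nonneg p.nonneg] at h1
  have join_v : ∀ p : EdgePt d, LipJoin (m p) (ι p.v) (1 - p.t) := by
    intro p
    let q : EdgePt d := ⟨p.u, p.v, 1, p.adj, zero_le_one, le_rfl⟩
    have h1 := join_edge p q rfl rfl
    have h2 : m q = ι p.v := eq_vertex q _ ((EdgePt.toVertex_v hd q).trans (sub_self (1 : ℝ)).le)
    rwa [h2, show p.t - q.t = p.t - 1 from rfl, abs_sub_comm,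
      abs_of_nonneg (by linarith [p.le_one])] at h1
  have dist_ι : ∀ g h, dist (ι g) (ι h) = d g h := fun g h => by
    rw [hm, EdgePt.gdist_vertex]
  have join_vertex : ∀ n g h, d g h = n → LipJoin (ι g) (ι h) n := by
    intro n
    induction n with
    | zero =>
      intro g h e
      have : ι g = ι h := dist_le_zero.1 (by rw [dist_ι, e]; simp)
      rw [this, Nat.cast_zero]
      exact LipJoin.refl _
    | succ n ih =>
      intro g h e
      obtain ⟨z, hz, hz'⟩ := hd.step g h n e
      have hz'' : d z h = n := by
        have := hd.triangle g z h
        omega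
      have h1 := join_u ⟨g, z, 1, hz, zero_le_one, le_rfl⟩
      have h2 := join_v ⟨g, z, 1, hz, zero_le_one, le_rfl⟩
      have h3 := (h1.symm.trans h2).trans (ih z h hz'')
      rw [show (1 : ℝ) + (1 - 1) + n = ((n + 1 : ℕ) : ℝ) by push_cast; ring] at h3
      exact h3
  have join_toVertex : ∀ (p : EdgePt d) h, LipJoin (m p) (ι h) (p.toVertex h) := by
    intro p h
    rcases min_choice (p.t + (d p.u h : ℝ)) (1 - p.t + d p.v h) with e | e <;>
      rw [EdgePt.toVertex, e]
    · exact (join_u p).trans (join_vertex _ _ _ rfl)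
    · exact (join_v p).trans (join_vertex _ _ _ rfl)
  refine ⟨SeparationQuotient (EdgePt d), inferInstance, ι, ?_, dist_ι, ?_⟩
  · intro x y
    obtain ⟨p, rfl⟩ := SeparationQuotient.surjective_mk x
    obtain ⟨q, rfl⟩ := SeparationQuotient.surjective_mk y
    change ∃ γ : ℝ → _, γ 0 = m p ∧ γ (dist (m p) (m q)) = m q ∧ _
    refine LipJoin.geodesic ?_
    rw [hm]
    rcases EdgePt.gdist_cases p q with e | ⟨hu, hv, e⟩
    · obtain ⟨h, e'⟩ := EdgePt.exists_viaVertex hd p q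
      rw [e, e']
      exact (join_toVertex p h).trans (join_toVertex q h).symm
    · rw [e]
      exact join_edge p q hu hv
  · intro x
    obtain ⟨p, rfl⟩ := SeparationQuotient.surjective_mk x
    rcases le_total p.t (1 / 2) with h | h
    · refine ⟨p.u, (hm p _).trans_le ((EdgePt.gdist_vertex_right hd p _).trans ?_)⟩
      exact (EdgePt.toVertex_u hd p).trans h
    · refine ⟨p.v, (hm p _).trans_le ((EdgePt.gdist_vertex_right hd p _).trans ?_)⟩
      exact (EdgePt.toVertex_v hd p).trans (by linarith)

/-- Cayley graphs have models in `Type`, whatever the universe of the group, since a finitely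
generated group is countable. -/
lemma exists_cayleyModel {G : Type*} [Group G] {S : Set G} (hS : Subgroup.closure S = ⊤)
    (hfin : S.Finite) :
    ∃ (X : Type) (_ : MetricSpace X) (ι : G → X), CayleyModel G S X ι := by
  have := countable_of_fg hS hfin
  let e : G ≃ Shrink.{0} G := equivShrink.{0} G
  have hd : IsGraphDist (fun a b : Shrink.{0} G => wordLength S ((e.symm a)⁻¹ * e.symm b)) := by
    refine ⟨fun a => by simp [wordLength_one], fun a b => ?_, fun a b c => ?_, fun a b n h => ?_⟩
    · rw [← wordLength_inv hS]
      simp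
    · have := wordLength_mul hS ((e.symm a)⁻¹ * e.symm b) ((e.symm b)⁻¹ * e.symm c)
      simpa [mul_assoc] using this
    · obtain ⟨s, hs, hs'⟩ := exists_step hS h
      refine ⟨e (e.symm a * s), ?_, ?_⟩
      · simpa using wordLength_letter hs
      · simpa [mul_assoc] using hs'
  obtain ⟨X, mX, ι, hgeo, hdist, hnear⟩ := exists_geodesic_model hd
  refine ⟨X, mX, ι ∘ e, hgeo, fun g h => ?_, fun x => ?_⟩
  · simp [hdist, wordDist]
  · obtain ⟨g, hg⟩ := hnear x
    exact ⟨e.symm g, by simpa using hg⟩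

/-! ### Passing to a subgroup -/

/-- If `K ≤ H` are strongly quasiconvex in `G`, then `K` is strongly quasiconvex in `H`. -/
lemma stronglyQuasiconvex_subgroupOf {G : Type*} [Group G]
    (hfg : ∃ S : Set G, S.Finite ∧ Subgroup.closure S = ⊤) {H K : Subgroup G} (hKH : K ≤ H)
    (hH : StronglyQuasiconvex H) (hK : StronglyQuasiconvex K) :
    StronglyQuasiconvex (K.subgroupOf H) := by
  obtain ⟨S, hfin, hS⟩ := hfg
  obtain ⟨X, mX, ι, hX⟩ := exists_cayleyModel hS hfin
  intro T hTfin hT Y mY κ hY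
  obtain ⟨A₁, hA₁⟩ := exists_lipschitz hS hT hTfin
  obtain ⟨A₂, hA₂⟩ := undistorted_of_isMorse hS hfin hX (hH S hfin hS X ι hX) hT
  have hKM := hK S hfin hS X ι hX
  obtain ⟨-, hd, -⟩ := hX
  obtain ⟨-, hdY, hnearY⟩ := hY
  choose p hp using hnearY
  obtain ⟨A, hA, hle₁, hle₂⟩ : ∃ A : ℝ, 1 ≤ A ∧ (A₁ : ℝ) ≤ A ∧ (A₂ : ℝ) ≤ A :=
    ⟨A₁ + A₂ + 1, by linarith [A₁.cast_nonneg (α := ℝ), A₂.cast_nonneg (α := ℝ)],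
      by linarith [A₂.cast_nonneg (α := ℝ)], by linarith [A₁.cast_nonneg (α := ℝ)]⟩
  -- The two halves of undistortedness, with a common constant.
  have up : ∀ h k : H, dist (ι h) (ι k) ≤ A * dist (κ h) (κ k) := by
    intro h k
    rw [hd, hdY, wordDist, wordDist]
    have : (wordLength S ((h : G)⁻¹ * k) : ℝ) ≤ A₁ * wordLength T (h⁻¹ * k) := by
      exact_mod_cast hA₁ (h⁻¹ * k)
    exact this.trans (by gcongr)
  have low : ∀ h k : H, dist (κ h) (κ k) ≤ A * (dist (ι h) (ι k) + 1) := by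
    intro h k
    rw [hd, hdY, wordDist, wordDist]
    have : (wordLength T (h⁻¹ * k) : ℝ) ≤ A₂ * (wordLength S ((h : G)⁻¹ * k) + 1) := by
      exact_mod_cast hA₂ (h⁻¹ * k)
    exact this.trans (by gcongr)
  -- Distances between vertices are integers, so the vertex chosen near a vertex is that vertex.
  have p_κ : ∀ h : H, p (κ h) = h := by
    intro h
    have h1 := hp (κ h)
    rw [hdY, wordDist] at h1
    have h2 : wordLength T (h⁻¹ * p (κ h)) < 1 := by
      exact_mod_cast (show (wordLength T (h⁻¹ * p (κ h)) : ℝ) < 1 by linarith)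
    exact (inv_mul_eq_one.1 (eq_one_of_wordLength hT (Nat.lt_one_iff.1 h2))).symm
  intro L C hL hC
  obtain ⟨M, hM0, hM⟩ := hKM (A * L) (A * (C + 1) + 1) (by nlinarith) (by positivity)
  refine ⟨1 / 2 + A * (M + 2), by positivity, ?_⟩
  rintro γ a b hab hγ ⟨u, hu, hua⟩ ⟨v, hv, hvb⟩ t ht
  have hA0 : 0 < A := by linarith
  have hQ : QIEmbedOn (fun s => ι (p (γ s))) (Icc a b) (A * L) (A * (C + 1) + 1) := by
    intro s hs r hr
    obtain ⟨l1, l2⟩ := hγ s hs r hr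
    have e1 := hp (γ s)
    have e2 := hp (γ r)
    have e3 := dist_triangle4 (γ s) (κ (p (γ s))) (κ (p (γ r))) (γ r)
    have e4 := dist_triangle4 (κ (p (γ s))) (γ s) (γ r) (κ (p (γ r)))
    rw [dist_comm (κ (p (γ r))) (γ r)] at e3
    rw [dist_comm (κ (p (γ s))) (γ s)] at e4
    have e5 := up (p (γ s)) (p (γ r))
    have e6 := low (p (γ s)) (p (γ r))
    constructor
    · have h1 : 1 / L * |s - r| ≤ A * (dist (ι (p (γ s))) (ι (p (γ r))) + 1) + (C + 1) := by
        linarith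
      have h2 : C + 1 ≤ A * (A * (C + 1)) := by nlinarith [mul_le_mul hA hA zero_le_one hA0.le]
      have h3 : 1 / (A * L) * |s - r| = (1 / L * |s - r|) / A := by
        field_simp
      rw [h3, sub_le_iff_le_add, div_le_iff₀ hA0]
      linarith
    · calc dist (ι (p (γ s))) (ι (p (γ r))) ≤ A * dist (κ (p (γ s))) (κ (p (γ r))) := e5
        _ ≤ A * (L * |s - r| + (C + 1)) := by gcongr; linarith
        _ ≤ _ := by linarith
  have hend : ∀ s, ∀ w : H, w ∈ K.subgroupOf H → κ w = γ s →
      ι (p (γ s)) ∈ ι '' (K : Set G) := by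
    intro s w hw e
    rw [← e, p_κ]
    exact ⟨w, hw, rfl⟩
  obtain ⟨k, hk, hkd⟩ := exists_near_of_infDist
    (hM _ a b hab hQ (hend a u hu hua) (hend b v hv hvb) t ht)
  have hk' : κ ⟨k, hKH hk⟩ ∈ κ '' (K.subgroupOf H : Set H) := ⟨⟨k, hKH hk⟩, hk, rfl⟩
  refine (infDist_le_dist_of_mem hk').trans ?_
  refine (dist_triangle _ (κ (p (γ t))) _).trans (add_le_add (hp _) ?_)
  refine (low _ _).trans (mul_le_mul_of_nonneg_left ?_ hA0.le)
  change dist (ι (p (γ t))) (ι k) + 1 ≤ M + 2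
  linarith

/-- The intersection of two strongly quasiconvex subgroups of a finitely generated group
is strongly quasiconvex in each of them and in the ambient group. -/
theorem inf_stronglyQuasiconvex
    {G : Type*} [Group G] (hfg : ∃ S : Set G, S.Finite ∧ Subgroup.closure S = ⊤)
    (H₁ H₂ : Subgroup G)
    (h₁ : StronglyQuasiconvex H₁) (h₂ : StronglyQuasiconvex H₂) :
    StronglyQuasiconvex ((H₁ ⊓ H₂).subgroupOf H₁) ∧
    StronglyQuasiconvex ((H₁ ⊓ H₂).subgroupOf H₂) ∧
    StronglyQuasiconvex (H₁ ⊓ H₂) := by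
  have h : StronglyQuasiconvex (H₁ ⊓ H₂) := fun S hfin hS X _ ι hX =>
    isMorse_inf hS hfin hX (h₁ S hfin hS X ι hX) (h₂ S hfin hS X ι hX)
  exact ⟨stronglyQuasiconvex_subgroupOf hfg inf_le_left h₁ h,
    stronglyQuasiconvex_subgroupOf hfg inf_le_right h₂ h, h⟩
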